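/- arXiv:1103.3693 — 3 statements merged into one kernel-verified Lean document; each statement's English description precedes it below -/
import Mathlib

section
/- Let F be a non-empty generalised clause-set all of whose clauses are non-empty. If max_{v∈var(F)} #_v(F) ≤ (min_{v∈var(F)} |D_v| − 1) · min_{C∈F} |C|, then F is matching satisfiable. -/
open scoped Classical

namespace GCLS

variable {V α : Type} [DecidableEq V] [DecidableEq α]

/-- A finite "functional" set of (variable, value) pairs, with values inside the
given domains `D`; used both for clauses and for partial assignments. -/
def FinFn (D : V → Finset α) : Type :=
  { s : Finset (V × α) // (∀ p ∈ s, p.2 ∈ D p.1) ∧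
      ∀ p ∈ s, ∀ q ∈ s, p.1 = q.1 → p = q }

variable {D : V → Finset α}

instance : DecidableEq (FinFn D) :=
  fun a b => decidable_of_iff (a.1 = b.1) Subtype.ext_iff.symm

namespace FinFn

/-- The set of variables occurring. -/
def vars (s : FinFn D) : Finset V := s.1.image Prod.fst

/-- Restriction to the pairs whose variable lies in `W`. -/
def restrictVars (s : FinFn D) (W : Finset V) : FinFn D :=
  ⟨s.1.filter (fun p => p.1 ∈ W),
   fun p hp => s.2.1 p (Finset.mem_filter.mp hp).1,
   fun p hp q hq h =>
     s.2.2 p (Finset.mem_filter.mp hp).1 q (Finset.mem_filter.mp hq).1 h⟩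

/-- Removal of a set of pairs. -/
def sdiff (s : FinFn D) (t : Finset (V × α)) : FinFn D :=
  ⟨s.1 \ t,
   fun p hp => s.2.1 p (Finset.mem_sdiff.mp hp).1,
   fun p hp q hq h =>
     s.2.2 p (Finset.mem_sdiff.mp hp).1 q (Finset.mem_sdiff.mp hq).1 h⟩

end FinFn

/-- Clauses: finite sets of literals `(v,ε)` (meaning "v ≠ ε"), at most one literal
per variable, values inside the domains. -/
abbrev Clause (D : V → Finset α) := FinFn D

/-- Partial assignments: finitely many variables get values inside their domains. -/
abbrev PAssign (D : V → Finset α) := FinFn D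

/-- `φ` satisfies the literal `(v,ε)` (i.e. "v ≠ ε"): `v` is assigned a value ≠ `ε`. -/
def SatLit (φ : PAssign D) (l : V × α) : Prop :=
  ∃ ε, (l.1, ε) ∈ φ.1 ∧ ε ≠ l.2

/-- `φ` satisfies a clause iff it satisfies some literal of it. -/
def SatClause (φ : PAssign D) (C : Clause D) : Prop :=
  ∃ l ∈ C.1, SatLit φ l

/-- The clause obtained from `C` by deleting all literals falsified by `φ`. -/
def Clause.restrict (φ : PAssign D) (C : Clause D) : Clause D :=
  FinFn.sdiff C φ.1

/-- The operation `φ * F` on multi-clause-sets: remove all clauses satisfied by `φ`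
and delete all falsified literals from the remaining clauses. -/
noncomputable def applyM (φ : PAssign D) (F : Multiset (Clause D)) : Multiset (Clause D) :=
  (F.filter (fun C => ¬ SatClause φ C)).map (Clause.restrict φ)

/-- The operation `φ * F` on clause-sets (with contraction of equal clauses). -/
noncomputable def applyF (φ : PAssign D) (F : Finset (Clause D)) : Finset (Clause D) :=
  (F.filter (fun C => ¬ SatClause φ C)).image (Clause.restrict φ)

/-- Satisfiability: some partial assignment satisfies all clauses. -/
def Sat (F : Multiset (Clause D)) : Prop :=
  ∃ φ : PAssign D, applyM φ F = 0

/-- Minimal unsatisfiability of a clause-set. -/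
def MinUnsat (F : Finset (Clause D)) : Prop :=
  ¬ Sat F.val ∧ ∀ F' ⊂ F, Sat F'.val

/-- The variables of a multi-clause-set. -/
def mvars (F : Multiset (Clause D)) : Finset V := F.toFinset.sup FinFn.vars

/-- The deficiency `δ(F) = c(F) - Σ_{v ∈ var(F)} (|D_v| - 1)`. -/
def delta (F : Multiset (Clause D)) : ℤ :=
  (Multiset.card F : ℤ) - ∑ v ∈ mvars F, ((D v).card - 1 : ℤ)

lemma powerset_toFinset_nonempty (F : Multiset (Clause D)) :
    F.powerset.toFinset.Nonempty :=
  ⟨0, by simp⟩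

/-- The maximal deficiency `δ*(F) = max {δ(F') : F' ≤ F}`. -/
noncomputable def deltaStar (F : Multiset (Clause D)) : ℤ :=
  F.powerset.toFinset.sup' (powerset_toFinset_nonempty F) delta

/-- A tight sub-multi-clause-set: `F' ≤ F` with `δ(F') = δ*(F)`. -/
noncomputable def Tight (F F' : Multiset (Clause D)) : Prop :=
  F' ≤ F ∧ delta F' = deltaStar F

/-- `F` is matching satisfiable: the clause-variable graph `B(F)` has a matching
covering all clause-nodes.  Such a matching is encoded as a multiset `P` of pairs
(clause-occurrence, variable-node), where the variable-nodes `(v,k)`,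
`k < |D v| - 1`, are the copies of the variable `v`; the matching covers each
clause-occurrence exactly once (`P.map Prod.fst = F`), uses pairwise distinct
variable-nodes, and respects adjacency in `B(F)`. -/
def MatchingSat (F : Multiset (Clause D)) : Prop :=
  ∃ P : Multiset (Clause D × (V × ℕ)),
    P.map Prod.fst = F ∧ (P.map Prod.snd).Nodup ∧
    ∀ p ∈ P, p.2.1 ∈ FinFn.vars p.1 ∧ p.2.2 < (D p.2.1).card - 1

/-- The edge between clause `C` and the copies of variable `v` is retained in
`B_φ(F)`: the literal of `C` with variable `v` is satisfied by `φ`. -/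
def EdgeSat (φ : PAssign D) (C : Clause D) (v : V) : Prop :=
  ∃ ε, (v, ε) ∈ C.1 ∧ SatLit φ (v, ε)

/-- `φ` is matching-satisfying for `F`: `B_φ(F)` has a matching covering all
clause-nodes. -/
def MatchingSatisfying (φ : PAssign D) (F : Multiset (Clause D)) : Prop :=
  ∃ P : Multiset (Clause D × (V × ℕ)),
    P.map Prod.fst = F ∧ (P.map Prod.snd).Nodup ∧
    ∀ p ∈ P, p.2.2 < (D p.2.1).card - 1 ∧ EdgeSat φ p.1 p.2.1

/-- The maximum size of a matching in `B(F)`. -/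
noncomputable def nu (F : Multiset (Clause D)) : ℕ :=
  sSup { k | ∃ P : Multiset (Clause D × (V × ℕ)),
    P.map Prod.fst ≤ F ∧ (P.map Prod.snd).Nodup ∧
    (∀ p ∈ P, p.2.1 ∈ FinFn.vars p.1 ∧ p.2.2 < (D p.2.1).card - 1) ∧
    Multiset.card P = k }

/-- The maximum size of a matching in `B_φ(F)`. -/
noncomputable def nuSub (φ : PAssign D) (F : Multiset (Clause D)) : ℕ :=
  sSup { k | ∃ P : Multiset (Clause D × (V × ℕ)),
    P.map Prod.fst ≤ F ∧ (P.map Prod.snd).Nodup ∧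
    (∀ p ∈ P, p.2.2 < (D p.2.1).card - 1 ∧ EdgeSat φ p.1 p.2.1) ∧
    Multiset.card P = k }

/-- `φ` is matching-maximum for `F`. -/
noncomputable def MatchingMaximum (φ : PAssign D) (F : Multiset (Clause D)) : Prop :=
  nuSub φ F = nu F

/-- `φ` is an autarky for `F`: every clause touched by `φ` is satisfied by `φ`. -/
def IsAutarky (φ : PAssign D) (F : Multiset (Clause D)) : Prop :=
  ∀ C ∈ F, (FinFn.vars C ∩ FinFn.vars φ).Nonempty → SatClause φ C

/-- `F` is lean: it has no non-trivial autarky. -/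
def IsLean (F : Multiset (Clause D)) : Prop :=
  ¬ ∃ φ : PAssign D, IsAutarky φ F ∧ (FinFn.vars φ ∩ mvars F).Nonempty

/-- The sub-multi-clause-set of clauses touched by the variables in `W`. -/
noncomputable def touchedBy (F : Multiset (Clause D)) (W : Finset V) : Multiset (Clause D) :=
  F.filter (fun C => (FinFn.vars C ∩ W).Nonempty)

/-- The restriction `F[W]`: keep the clauses touching `W` and delete from them all
literals whose variable is not in `W`. -/
noncomputable def restrictTo (F : Multiset (Clause D)) (W : Finset V) : Multiset (Clause D) :=
  (touchedBy F W).map (fun C => FinFn.restrictVars C W)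

/-- `φ` is a matching autarky for `F`: `φ` is matching-satisfying for the
sub-multi-clause-set of clauses touched by `φ`. -/
noncomputable def IsMatchingAutarky (φ : PAssign D) (F : Multiset (Clause D)) : Prop :=
  MatchingSatisfying φ (touchedBy F (FinFn.vars φ))

/-- `F` is matching lean: no non-trivial matching autarky. -/
noncomputable def MatchingLean (F : Multiset (Clause D)) : Prop :=
  ¬ ∃ φ : PAssign D, IsMatchingAutarky φ F ∧ (FinFn.vars φ ∩ mvars F).Nonempty

lemma surp_nonempty {F : Multiset (Clause D)} (h : (mvars F).Nonempty) :
    ((mvars F).powerset.erase ∅).Nonempty := by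
  obtain ⟨v, hv⟩ := h
  refine ⟨{v}, ?_⟩
  simp [Finset.mem_erase, Finset.singleton_subset_iff, hv]

/-- The surplus `surp(F) = min {δ(F[W]) : ∅ ≠ W ⊆ var(F)}` (and `0` if `var(F) = ∅`). -/
noncomputable def surp (F : Multiset (Clause D)) : ℤ :=
  if h : (mvars F).Nonempty then
    ((mvars F).powerset.erase ∅).inf' (surp_nonempty h)
      (fun W => delta (restrictTo F W))
  else 0

/-- The number of occurrences of the literal `l` in `F`. -/
noncomputable def litCount (F : Multiset (Clause D)) (l : V × α) : ℕ :=
  Multiset.card (F.filter (fun C => l ∈ C.1))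

/-- The number of occurrences `#_v(F)` of the variable `v` in `F`. -/
noncomputable def varCount (F : Multiset (Clause D)) (v : V) : ℕ :=
  ∑ ε ∈ D v, litCount F (v, ε)

/-- The partial assignment `⟨v → ε⟩`. -/
def single (v : V) (ε : α) (hε : ε ∈ D v) : PAssign D :=
  ⟨{(v, ε)}, by
    refine ⟨?_, ?_⟩
    · intro p hp
      rw [Finset.mem_singleton] at hp
      subst hp; exact hε
    · intro p hp q hq _
      rw [Finset.mem_singleton] at hp hq
      subst hp; subst hq; rfl⟩

/-- Composition `φ ∘ ψ` of partial assignments: domain is the union of the domains,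
`ψ` taking precedence. -/
def comp (φ ψ : PAssign D) : PAssign D :=
  ⟨ψ.1 ∪ φ.1.filter (fun p => p.1 ∉ FinFn.vars ψ), by
    constructor
    · intro p hp
      rcases Finset.mem_union.mp hp with h | h
      · exact ψ.2.1 p h
      · exact φ.2.1 p (Finset.mem_filter.mp h).1
    · intro p hp q hq hpq
      rcases Finset.mem_union.mp hp with h1 | h1 <;>
        rcases Finset.mem_union.mp hq with h2 | h2
      · exact ψ.2.2 p h1 q h2 hpq
      · exact absurd (hpq ▸ Finset.mem_image_of_mem Prod.fst h1)
          (Finset.mem_filter.mp h2).2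
      · exact absurd (hpq.symm ▸ Finset.mem_image_of_mem Prod.fst h2)
          (Finset.mem_filter.mp h1).2
      · exact φ.2.2 p (Finset.mem_filter.mp h1).1 q (Finset.mem_filter.mp h2).1 hpq⟩

/-- Two clauses clash (in some variable). -/
def Clash (C C' : Clause D) : Prop :=
  ∃ v ε ε', (v, ε) ∈ C.1 ∧ (v, ε') ∈ C'.1 ∧ ε ≠ ε'

/-- The number of variables in which two clauses clash. -/
noncomputable def clashCount (C C' : Clause D) : ℕ :=
  ((FinFn.vars C).filter
    (fun v => ∃ ε ε', (v, ε) ∈ C.1 ∧ (v, ε') ∈ C'.1 ∧ ε ≠ ε')).card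

/-- Hitting clause-sets: every two distinct clauses clash. -/
def Hitting (F : Finset (Clause D)) : Prop :=
  ∀ C ∈ F, ∀ C' ∈ F, C ≠ C' → Clash C C'

/-- Boolean clauses over the boolean variables `V × α` (one boolean variable per
generalised literal; the value `false` gives the positive boolean literal). -/
abbrev BClause (V α : Type) :=
  Clause (fun _ : V × α => (Finset.univ : Finset Bool))

/-- The direct translation of a single clause: each literal `(v,ε)` is replaced by
the positive boolean literal of the boolean variable `(v,ε)`. -/
def dirClause (C : Clause D) : BClause V α :=
  ⟨C.1.image (fun p => (p, false)), by
    constructor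
    · intro p _; exact Finset.mem_univ _
    · intro p hp q hq h
      simp only [Finset.mem_image] at hp hq
      obtain ⟨a, -, rfl⟩ := hp
      obtain ⟨b, -, rfl⟩ := hq
      exact congrArg (fun x => (x, false)) h⟩

/-- The ALO-clause for a variable `v`: the negative boolean literals of the boolean
variables `(v,ε)` for `ε ∈ D v`. -/
def aloClause (D : V → Finset α) (v : V) : BClause V α :=
  ⟨(D v).image (fun ε => ((v, ε), true)), by
    constructor
    · intro p _; exact Finset.mem_univ _
    · intro p hp q hq h
      simp only [Finset.mem_image] at hp hq
      obtain ⟨a, -, rfl⟩ := hp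
      obtain ⟨b, -, rfl⟩ := hq
      exact congrArg (fun x => (x, true)) h⟩

/-- The direct translation `Γ(F)`: the translated clauses together with the
ALO-clauses for all occurring variables. -/
noncomputable def dirTrans (F : Finset (Clause D)) : Finset (BClause V α) :=
  F.image dirClause ∪ (mvars F.val).image (aloClause D)

/-!
Let every clause `C` spread a unit weight evenly over its variables. Each of the `#_v(F)` clauses
containing `v` gives it `1 / |C| ≤ (|D_v| - 1) / #_v(F)`, so `v` receives at most `|D_v| - 1`, the
number of its copies. This fractional matching yields Hall's condition for the clause-nodes of
`B(F)`.
-/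

section CapacitatedHall

variable {ι β : Type*} [DecidableEq β] {t : ι → Finset β} {c : β → ℕ}

theorem exists_injective_of_card_le_sum_biUnion
    (hall : ∀ s : Finset ι, s.card ≤ ∑ b ∈ s.biUnion t, c b) :
    ∃ f : ι → β × ℕ, Function.Injective f ∧ ∀ i, (f i).1 ∈ t i ∧ (f i).2 < c (f i).1 := by
  let copies (u : Finset β) : Finset (Σ _ : β, ℕ) := u.sigma fun b => Finset.range (c b)
  have copies_biUnion (s : Finset ι) :
      s.biUnion (fun i => copies (t i)) = copies (s.biUnion t) := by
    ext ⟨b, n⟩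
    simp only [copies, Finset.mem_biUnion, Finset.mem_sigma]
    tauto
  have card_copies (u : Finset β) : (copies u).card = ∑ b ∈ u, c b := by
    simp only [copies, Finset.card_sigma, Finset.card_range]
  obtain ⟨f, hf, hft⟩ :=
    (Finset.all_card_le_biUnion_card_iff_exists_injective fun i => copies (t i)).mp fun s => by
      rw [copies_biUnion, card_copies]
      exact hall s
  refine ⟨fun i => Equiv.sigmaEquivProd β ℕ (f i),
    (Equiv.sigmaEquivProd β ℕ).injective.comp hf, fun i => ?_⟩
  simpa only [copies, Finset.mem_sigma, Finset.mem_range, Equiv.sigmaEquivProd_apply] using hft i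

theorem sum_inv_le_of_card_le_mul {𝕜 : Type*} [Field 𝕜] [LinearOrder 𝕜] [IsStrictOrderedRing 𝕜]
    {s : Finset ι} {d : ι → ℕ} {n : ℕ} (h : ∀ i ∈ s, s.card ≤ n * d i) :
    ∑ i ∈ s, (d i : 𝕜)⁻¹ ≤ n := by
  rcases s.eq_empty_or_nonempty with rfl | hs
  · simp
  have hs_pos : (0 : 𝕜) < s.card := by exact_mod_cast hs.card_pos
  have inv_le : ∀ i ∈ s, (d i : 𝕜)⁻¹ ≤ n / s.card := fun i hi => by
    have hd_pos : (0 : 𝕜) < d i := by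
      exact_mod_cast Nat.pos_of_mul_pos_left (hs.card_pos.trans_le (h i hi))
    rw [inv_eq_one_div, div_le_div_iff₀ hd_pos hs_pos, one_mul]
    exact_mod_cast h i hi
  calc ∑ i ∈ s, (d i : 𝕜)⁻¹ ≤ s.card • (n / s.card : 𝕜) := s.sum_le_card_nsmul _ _ inv_le
    _ = n := by rw [nsmul_eq_mul, mul_div_cancel₀ _ hs_pos.ne']

theorem card_le_sum_biUnion_of_degree_le_mul {s : Finset ι} (hne : ∀ i ∈ s, (t i).Nonempty)
    (hdeg : ∀ i ∈ s, ∀ b ∈ t i, (s.filter (b ∈ t ·)).card ≤ c b * (t i).card) :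
    s.card ≤ ∑ b ∈ s.biUnion t, c b := by
  have unit_weight : ∀ i ∈ s, ∑ _b ∈ t i, ((t i).card : ℚ)⁻¹ = 1 := fun i hi => by
    rw [Finset.sum_const, nsmul_eq_mul, mul_inv_cancel₀]
    exact_mod_cast (hne i hi).card_ne_zero
  suffices (s.card : ℚ) ≤ ∑ b ∈ s.biUnion t, (c b : ℚ) by exact_mod_cast this
  calc (s.card : ℚ) = ∑ i ∈ s, ∑ _b ∈ t i, ((t i).card : ℚ)⁻¹ := by
        rw [Finset.sum_congr rfl unit_weight, Finset.cast_card]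
    _ = ∑ b ∈ s.biUnion t, ∑ i ∈ s with b ∈ t i, ((t i).card : ℚ)⁻¹ :=
        Finset.sum_comm' fun i b => by
          simp only [Finset.mem_filter, Finset.mem_biUnion]
          tauto
    _ ≤ ∑ b ∈ s.biUnion t, (c b : ℚ) := Finset.sum_le_sum fun b _ =>
        sum_inv_le_of_card_le_mul fun i hi =>
          hdeg i (Finset.mem_of_mem_filter i hi) b (Finset.mem_filter.mp hi).2

theorem exists_injective_of_degree_le_mul [Fintype ι] (hne : ∀ i, (t i).Nonempty)
    (hdeg : ∀ i, ∀ b ∈ t i, (Finset.univ.filter (b ∈ t ·)).card ≤ c b * (t i).card) :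
    ∃ f : ι → β × ℕ, Function.Injective f ∧ ∀ i, (f i).1 ∈ t i ∧ (f i).2 < c (f i).1 :=
  exists_injective_of_card_le_sum_biUnion fun s =>
    card_le_sum_biUnion_of_degree_le_mul (fun i _ => hne i) fun i _ b hb =>
      (Finset.card_le_card (Finset.filter_subset_filter _ s.subset_univ)).trans (hdeg i b hb)

end CapacitatedHall

theorem card_filter_coe_eq_countP {γ : Type*} [DecidableEq γ] (m : Multiset γ) (p : γ → Prop)
    [DecidablePred p] : (Finset.univ.filter fun x : m => p x.1).card = m.countP p := by
  conv_rhs => rw [← m.map_univ_coe, Multiset.countP_map]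
  rfl

omit [DecidableEq α] in
theorem card_vars (C : Clause D) : C.vars.card = C.1.card :=
  Finset.card_image_of_injOn fun p hp q hq hpq => C.2.2 p hp q hq hpq

theorem mem_mvars {F : Multiset (Clause D)} {v : V} : v ∈ mvars F ↔ ∃ C ∈ F, v ∈ C.vars := by
  simp only [mvars, Finset.mem_sup, Multiset.mem_toFinset]

theorem card_filter_mem_clause (C : Clause D) (v : V) :
    ((D v).filter fun ε => (v, ε) ∈ C.1).card = if v ∈ C.vars then 1 else 0 := by
  split_ifs with hv
  · obtain ⟨⟨w, ε⟩, hl, rfl⟩ := Finset.mem_image.mp hv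
    refine Finset.card_eq_one.mpr ⟨ε, Finset.ext fun ε' => ?_⟩
    rw [Finset.mem_filter, Finset.mem_singleton]
    refine ⟨fun hε' => congrArg Prod.snd (C.2.2 _ hε'.2 _ hl rfl), ?_⟩
    rintro rfl
    exact ⟨C.2.1 _ hl, hl⟩
  · refine Finset.card_eq_zero.mpr (Finset.filter_eq_empty_iff.mpr fun ε _ hl => hv ?_)
    exact Finset.mem_image_of_mem Prod.fst hl

theorem litCount_cons (C : Clause D) (F : Multiset (Clause D)) (l : V × α) :
    litCount (C ::ₘ F) l = litCount F l + if l ∈ C.1 then 1 else 0 := by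
  simp only [litCount, ← Multiset.countP_eq_card_filter, Multiset.countP_cons]

theorem varCount_eq_countP (F : Multiset (Clause D)) (v : V) :
    varCount F v = F.countP (v ∈ ·.vars) := by
  induction F using Multiset.induction with
  | empty => simp [varCount, litCount]
  | cons C F ih =>
    rw [Multiset.countP_cons, ← ih, ← card_filter_mem_clause, Finset.card_filter]
    simp only [varCount, litCount_cons, Finset.sum_add_distrib]

theorem matchingSat_of_injective {F : Multiset (Clause D)} {f : F → V × ℕ}
    (hf : Function.Injective f)
    (hadj : ∀ C : F, (f C).1 ∈ C.1.vars ∧ (f C).2 < (D (f C).1).card - 1) : MatchingSat F := by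
  refine ⟨Finset.univ.val.map fun C : F => (C.1, f C), ?_, ?_, fun p hp => ?_⟩
  · rw [Multiset.map_map]
    exact F.map_univ_coe
  · rw [Multiset.map_map]
    exact Finset.univ.nodup.map hf
  · obtain ⟨C, -, rfl⟩ := Multiset.mem_map.mp hp
    exact hadj C

theorem matching_sat_of_bounded_var_degree_general {F : Multiset (Clause D)}
    (hcl : ∀ C ∈ F, C.1.Nonempty)
    (h : ∀ C ∈ F, ∀ v ∈ C.vars, varCount F v ≤ ((D v).card - 1) * C.1.card) :
    MatchingSat F := by
  have vars_nonempty (C : F) : C.1.vars.Nonempty := (hcl C.1 Multiset.coe_mem).image Prod.fst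
  have degree_le (C : F) (v : V) (hv : v ∈ C.1.vars) :
      (Finset.univ.filter fun C' : F => v ∈ C'.1.vars).card
        ≤ ((D v).card - 1) * C.1.vars.card := by
    rw [card_filter_coe_eq_countP F (v ∈ ·.vars), ← varCount_eq_countP, card_vars]
    exact h C.1 Multiset.coe_mem v hv
  obtain ⟨f, hf, hadj⟩ := exists_injective_of_degree_le_mul vars_nonempty degree_le
  exact matchingSat_of_injective hf hadj

/-- if `F` is a non-empty clause-set, all of whose clauses are non-empty,
with `max_{v ∈ var(F)} #_v(F) ≤ (min_{v ∈ var(F)} |D_v| − 1) · min_{C ∈ F} |C|`,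
then `F` is matching satisfiable. -/
theorem matching_sat_of_bounded_var_degree
    (hD : ∀ v, (D v).Nonempty) (F : Finset (Clause D))
    (hne : F.Nonempty) (hcl : ∀ C ∈ F, C.1.Nonempty)
    (h : ∀ v ∈ mvars F.val, ∀ w ∈ mvars F.val, ∀ C ∈ F,
        varCount F.val v ≤ ((D w).card - 1) * C.1.card) :
    MatchingSat F.val := by
  refine matching_sat_of_bounded_var_degree_general hcl fun C hC v hv => ?_
  have hv_mem : v ∈ mvars F.val := mem_mvars.mpr ⟨C, hC, hv⟩
  exact h v hv_mem v hv_mem C hC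

end GCLS
end

section
/- Let F be a generalised multi-clause-set and φ, ψ partial assignments. If φ∘ψ is matching-satisfying for F, then φ is matching-satisfying for ψ*F. -/
open scoped Classical

namespace GCLS

variable {V α : Type} [DecidableEq V] [DecidableEq α]

variable {D : V → Finset α}

lemma exists_le_map_eq_of_le_map {β γ : Type*} {f : β → γ} {s : Multiset β} {t : Multiset γ}
    (h : t ≤ s.map f) : ∃ u ≤ s, u.map f = t := by
  induction s using Quotient.inductionOn
  induction t using Quotient.inductionOn
  obtain ⟨_, hperm, hsub⟩ := h
  obtain ⟨l, hl, rfl⟩ := List.sublist_map_iff.mp hsub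
  exact ⟨l, hl.subperm, Multiset.coe_eq_coe.mpr hperm⟩

lemma mem_comp {φ ψ : PAssign D} {p : V × α} :
    p ∈ (comp φ ψ).1 ↔ p ∈ ψ.1 ∨ p ∈ φ.1 ∧ p.1 ∉ FinFn.vars ψ := by
  simp only [comp, Finset.mem_union, Finset.mem_filter]

lemma satLit_comp {φ ψ : PAssign D} {l : V × α} :
    SatLit (comp φ ψ) l ↔ SatLit ψ l ∨ SatLit φ l ∧ l.1 ∉ FinFn.vars ψ := by
  simp only [SatLit, mem_comp, or_and_right, exists_or, and_right_comm, exists_and_right]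

lemma Clause.mem_restrict {ψ : PAssign D} {C : Clause D} {l : V × α} :
    l ∈ (Clause.restrict ψ C).1 ↔ l ∈ C.1 ∧ l ∉ ψ.1 :=
  Finset.mem_sdiff

lemma EdgeSat.restrict_of_comp {φ ψ : PAssign D} {C : Clause D} {v : V}
    (h : EdgeSat (comp φ ψ) C v) (hC : ¬ SatClause ψ C) :
    EdgeSat φ (Clause.restrict ψ C) v := by
  obtain ⟨ε, hεC, hsat⟩ := h
  obtain hψ | ⟨hφ, hv⟩ := satLit_comp.mp hsat
  · exact absurd ⟨_, hεC, hψ⟩ hC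
  · have not_falsified : (v, ε) ∉ ψ.1 := fun hε => hv (Finset.mem_image_of_mem Prod.fst hε)
    exact ⟨ε, Clause.mem_restrict.mpr ⟨hεC, not_falsified⟩, hφ⟩

namespace MatchingSatisfying

omit [DecidableEq V] [DecidableEq α]

variable {φ φ' : PAssign D} {F G : Multiset (Clause D)}

lemma mono (hF : MatchingSatisfying φ F) (hGF : G ≤ F) : MatchingSatisfying φ G := by
  obtain ⟨P, rfl, hnodup, hedge⟩ := hF
  obtain ⟨Q, hQP, rfl⟩ := exists_le_map_eq_of_le_map hGF
  exact ⟨Q, rfl, Multiset.nodup_of_le (Multiset.map_le_map hQP) hnodup,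
    fun p hp => hedge p (Multiset.mem_of_le hQP hp)⟩

lemma map (hF : MatchingSatisfying φ F) (f : Clause D → Clause D)
    (hf : ∀ C ∈ F, ∀ v, EdgeSat φ C v → EdgeSat φ' (f C) v) :
    MatchingSatisfying φ' (F.map f) := by
  obtain ⟨P, rfl, hnodup, hedge⟩ := hF
  refine ⟨P.map (Prod.map f id), ?_, ?_, ?_⟩
  · simp only [Multiset.map_map, Function.comp_def, Prod.map_fst]
  · simpa only [Multiset.map_map, Function.comp_def, Prod.map_snd, id] using hnodup
  · intro q hq
    obtain ⟨p, hp, rfl⟩ := Multiset.mem_map.mp hq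
    obtain ⟨hcopy, hsat⟩ := hedge p hp
    exact ⟨hcopy, hf p.1 (Multiset.mem_map_of_mem Prod.fst hp) p.2.1 hsat⟩

end MatchingSatisfying

/-- if `φ ∘ ψ` is matching-satisfying for `F`, then `φ` is
matching-satisfying for `ψ * F`. -/
theorem matchingSatisfying_of_comp
    (hD : ∀ v, (D v).Nonempty) (F : Multiset (Clause D)) (φ ψ : PAssign D)
    (h : MatchingSatisfying (comp φ ψ) F) :
    MatchingSatisfying φ (applyM ψ F) := by
  have h_unsatisfied : MatchingSatisfying (comp φ ψ) (F.filter fun C => ¬ SatClause ψ C) :=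
    h.mono (Multiset.filter_le _ F)
  exact h_unsatisfied.map (Clause.restrict ψ) fun C hC v hedge =>
    hedge.restrict_of_comp (Multiset.mem_filter.mp hC).2

end GCLS
end

section
/- For every satisfiable generalised multi-clause-set F there exists a partial assignment φ with n(φ) ≤ δ*(F) (where n(φ) := |var(φ)|) such that φ*F is matching satisfiable. -/
open scoped Classical

namespace GCLS

variable {V α : Type} [DecidableEq V] [DecidableEq α]

variable {D : V → Finset α}

/-!
Restrict a satisfying assignment to an inclusion-minimal set `A` of variables for which the
clauses left unsatisfied still meet Hall's condition in the variables outside `A`. By minimality,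
giving up `v ∈ A` produces a set `K v` of clauses that exceeds the capacity outside `A` by more than
`|D v| - 1`. Every clause common to two of the sets `K v` is unsatisfied by the assignment on `A`,
so intersections have non-positive deficiency and supermodularity makes the excesses add up:
`⋃ v ∈ A, K v` exceeds the capacity outside `A` by at least `∑ v ∈ A, |D v|`. Charging it also for
the variables in `A` leaves a deficiency of at least `|A|`.
-/

section Deficit

open Finset

variable {ι κ X : Type*} [DecidableEq X]

/-- The deficiency of the subfamily `K` of a family `N` of finite sets whose points carry
capacities `w`: Hall's condition for `K` says that it is at most `0`. -/
def deficit (N : ι → Finset X) (w : X → ℕ) (K : Finset ι) : ℤ :=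
  #K - ∑ x ∈ K.biUnion N, (w x : ℤ)

lemma deficit_empty (N : ι → Finset X) (w : X → ℕ) : deficit N w ∅ = 0 := by
  simp [deficit]

lemma deficit_congr {N N' : ι → Finset X} (w : X → ℕ) {K : Finset ι}
    (h : ∀ i ∈ K, N i = N' i) : deficit N w K = deficit N' w K := by
  rw [deficit, deficit, biUnion_congr rfl h]

lemma deficit_map (N : ι → Finset X) (w : X → ℕ) (e : κ ↪ ι) (K : Finset κ) :
    deficit N w (K.map e) = deficit (fun k ↦ N (e k)) w K := by
  classical
  rw [deficit, deficit, card_map, map_eq_image, image_biUnion]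

lemma deficit_add_deficit_le [DecidableEq ι] (N : ι → Finset X) (w : X → ℕ) (K L : Finset ι) :
    deficit N w K + deficit N w L ≤ deficit N w (K ∪ L) + deficit N w (K ∩ L) := by
  have hcard : (#(K ∪ L) : ℤ) + #(K ∩ L) = #K + #L := mod_cast card_union_add_card_inter K L
  have hunion : (K ∪ L).biUnion N = K.biUnion N ∪ L.biUnion N := union_biUnion
  have hinter : ∑ x ∈ (K ∩ L).biUnion N, (w x : ℤ) ≤ ∑ x ∈ K.biUnion N ∩ L.biUnion N, (w x : ℤ) :=
    sum_le_sum_of_subset_of_nonneg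
      (subset_inter (biUnion_subset_biUnion_of_subset_left N inter_subset_left)
        (biUnion_subset_biUnion_of_subset_left N inter_subset_right))
      fun _ _ _ ↦ by positivity
  have hsum := sum_union_inter (s₁ := K.biUnion N) (s₂ := L.biUnion N) (f := fun x ↦ (w x : ℤ))
  rw [← hunion] at hsum
  simp only [deficit]
  linarith

lemma sum_deficit_le_deficit_biUnion [DecidableEq ι] {N : ι → Finset X} {w : X → ℕ}
    {K : κ → Finset ι} {T : Finset κ}
    (hoverlap : ∀ L : Finset ι, (∀ i ∈ L, ∃ s ∈ T, ∃ t ∈ T, s ≠ t ∧ i ∈ K s ∧ i ∈ K t) →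
      deficit N w L ≤ 0) :
    ∑ t ∈ T, deficit N w (K t) ≤ deficit N w (T.biUnion K) := by
  classical
  induction T using Finset.induction_on with
  | empty => simp [deficit_empty]
  | insert a T ha ih =>
    have hT : ∑ t ∈ T, deficit N w (K t) ≤ deficit N w (T.biUnion K) := by
      refine ih fun L hL ↦ hoverlap L fun i hi ↦ ?_
      obtain ⟨s, hs, t, ht, hst⟩ := hL i hi
      exact ⟨s, mem_insert_of_mem hs, t, mem_insert_of_mem ht, hst⟩
    have hinter : deficit N w (K a ∩ T.biUnion K) ≤ 0 := by
      refine hoverlap _ fun i hi ↦ ?_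
      obtain ⟨hia, hiT⟩ := mem_inter.1 hi
      obtain ⟨t, ht, hit⟩ := mem_biUnion.1 hiT
      exact ⟨a, mem_insert_self a T, t, mem_insert_of_mem ht, fun h ↦ ha (h ▸ ht), hia, hit⟩
    rw [sum_insert ha, biUnion_insert]
    linarith [deficit_add_deficit_le N w (K a) (T.biUnion K)]

lemma deficit_sdiff_le (N : ι → Finset X) (w : X → ℕ) (A : Finset X) (K : Finset ι) :
    deficit (fun i ↦ N i \ A) w K ≤ deficit N w K + ∑ x ∈ A, (w x : ℤ) := by
  have hsub : K.biUnion N ⊆ K.biUnion (fun i ↦ N i \ A) ∪ A := by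
    intro x
    simp only [mem_biUnion, mem_union, mem_sdiff]
    grind
  have hsum : ∑ x ∈ K.biUnion N, (w x : ℤ) ≤
      ∑ x ∈ K.biUnion (fun i ↦ N i \ A), (w x : ℤ) + ∑ x ∈ A, (w x : ℤ) :=
    (sum_le_sum_of_subset_of_nonneg hsub fun _ _ _ ↦ by positivity).trans
      (by rw [← sum_union_inter]; exact le_add_of_nonneg_right (by positivity))
  simp only [deficit]
  linarith

lemma deficit_sdiff_erase {N : ι → Finset X} {K : Finset ι} {A : Finset X} {a : X}
    (w : X → ℕ) (ha : a ∈ A) (haK : a ∈ K.biUnion N) :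
    deficit (fun i ↦ N i \ A.erase a) w K = deficit (fun i ↦ N i \ A) w K - w a := by
  have hinsert : K.biUnion (fun i ↦ N i \ A.erase a) =
      insert a (K.biUnion fun i ↦ N i \ A) := by
    ext x
    simp only [mem_biUnion, mem_insert, mem_sdiff, mem_erase] at haK ⊢
    grind
  rw [deficit, deficit, hinsert, sum_insert (by simp [ha])]
  ring

lemma exists_injective_of_deficit_nonpos {N : ι → Finset X} {w : X → ℕ}
    (hall : ∀ K, deficit N w K ≤ 0) :
    ∃ f : ι → X × ℕ, f.Injective ∧ ∀ i, (f i).1 ∈ N i ∧ (f i).2 < w (f i).1 := by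
  let copies (i : ι) : Finset (Σ _ : X, ℕ) := (N i).sigma fun x ↦ range (w x)
  have hcard (K : Finset ι) : #K ≤ #(K.biUnion copies) := by
    have hcopies : K.biUnion copies = (K.biUnion N).sigma fun x ↦ range (w x) := by
      ext
      simp only [copies, mem_biUnion, mem_sigma]
      tauto
    have hK := hall K
    rw [deficit] at hK
    simp only [hcopies, card_sigma, card_range]
    zify
    linarith
  obtain ⟨f, hf, hmem⟩ := (all_card_le_biUnion_card_iff_exists_injective copies).1 hcard
  exact ⟨fun i ↦ Equiv.sigmaEquivProd X ℕ (f i), (Equiv.injective _).comp hf,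
    fun i ↦ by simpa [copies] using hmem i⟩

/-- Hall's condition outside `A` for the sets `N i` such that `S i` avoids `A`. For clauses, `N i`
is the set of variables of the `i`-th clause and `S i` the set of variables at which a given
assignment satisfies it; `S i` avoids `A` if the assignment on `A` leaves the clause unsatisfied. -/
def HallOutside (N S : ι → Finset X) (w : X → ℕ) (A : Finset X) : Prop :=
  ∀ K : Finset ι, (∀ i ∈ K, Disjoint (S i) A) → deficit (fun i ↦ N i \ A) w K ≤ 0

variable {N S : ι → Finset X} {w : X → ℕ} {A : Finset X}

lemma exists_lt_deficit_of_minimal_hallOutside (hSN : ∀ i, S i ⊆ N i)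
    (hA : Minimal (HallOutside N S w) A) {a : X} (ha : a ∈ A) :
    ∃ K : Finset ι, (∀ i ∈ K, Disjoint (S i) (A.erase a)) ∧
      (w a : ℤ) < deficit (fun i ↦ N i \ A) w K := by
  have hnot : ¬ HallOutside N S w (A.erase a) := hA.not_prop_of_lt (erase_ssubset ha)
  simp only [HallOutside, not_forall, not_le] at hnot
  obtain ⟨K, hdisj, hpos⟩ := hnot
  refine ⟨K, hdisj, ?_⟩
  have haK : a ∈ K.biUnion N := by
    by_contra haK
    have haN (i) (hi : i ∈ K) : a ∉ N i := fun h ↦ haK (mem_biUnion.2 ⟨i, hi, h⟩)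
    have hSA (i) (hi : i ∈ K) : Disjoint (S i) A :=
      disjoint_of_erase_right (fun h ↦ haN i hi (hSN i h)) (hdisj i hi)
    have hsdiff (i) (hi : i ∈ K) : N i \ A.erase a = N i \ A := by
      grind
    rw [deficit_congr w hsdiff] at hpos
    exact hpos.not_ge (hA.prop K hSA)
  rw [deficit_sdiff_erase w ha haK] at hpos
  linarith

theorem exists_card_le_deficit_of_minimal_hallOutside (hSN : ∀ i, S i ⊆ N i)
    (hA : Minimal (HallOutside N S w) A) : ∃ K : Finset ι, (#A : ℤ) ≤ deficit N w K := by
  classical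
  choose! K hdisj hexcess using
    fun a (ha : a ∈ A) ↦ exists_lt_deficit_of_minimal_hallOutside hSN hA ha
  have hoverlap (L : Finset ι) (hL : ∀ i ∈ L, ∃ a ∈ A, ∃ b ∈ A, a ≠ b ∧ i ∈ K a ∧ i ∈ K b) :
      deficit (fun i ↦ N i \ A) w L ≤ 0 := by
    refine hA.prop L fun i hi ↦ ?_
    obtain ⟨a, ha, b, hb, hab, hia, hib⟩ := hL i hi
    exact disjoint_of_erase_right
      (fun haS ↦ disjoint_left.1 (hdisj b hb i hib) haS (mem_erase.2 ⟨hab, ha⟩)) (hdisj a ha i hia)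
  refine ⟨A.biUnion K, ?_⟩
  have hcharged : ∑ a ∈ A, ((w a : ℤ) + 1) ≤ deficit N w (A.biUnion K) + ∑ a ∈ A, (w a : ℤ) :=
    calc ∑ a ∈ A, ((w a : ℤ) + 1)
      _ ≤ ∑ a ∈ A, deficit (fun i ↦ N i \ A) w (K a) := sum_le_sum hexcess
      _ ≤ deficit (fun i ↦ N i \ A) w (A.biUnion K) := sum_deficit_le_deficit_biUnion hoverlap
      _ ≤ deficit N w (A.biUnion K) + ∑ a ∈ A, (w a : ℤ) := deficit_sdiff_le N w A _
  rw [sum_add_distrib, sum_const, nsmul_one] at hcharged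
  linarith

end Deficit

section Clauses

omit [DecidableEq α] in
lemma card_pos_of_mem_vars {s : FinFn D} {v : V} (hv : v ∈ s.vars) : 0 < (D v).card := by
  obtain ⟨p, hp, rfl⟩ := Finset.mem_image.1 hv
  exact Finset.card_pos.2 ⟨p.2, s.2.1 p hp⟩

omit [DecidableEq α] in
lemma vars_restrictVars {s : FinFn D} {W : Finset V} (hW : W ⊆ s.vars) :
    (s.restrictVars W).vars = W := by
  calc (s.restrictVars W).vars
    _ = s.vars.filter (· ∈ W) := (Finset.filter_image (s := s.1) (p := (· ∈ W))).symm
    _ = W := Finset.filter_mem_eq_inter.trans (Finset.inter_eq_right.2 hW)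

omit [DecidableEq α] in
lemma restrictVars_vars (s : FinFn D) : s.restrictVars s.vars = s :=
  Subtype.ext (Finset.filter_true_of_mem fun _ hp ↦ Finset.mem_image_of_mem _ hp)

/-- The number of copies of `v` in the clause-variable graph. The subtraction is truncated, which is
harmless for variables that occur in clauses, as their domains are non-empty. -/
def numCopies (D : V → Finset α) (v : V) : ℕ := (D v).card - 1

/-- The variables of `C` whose literal in `C` is satisfied by `φ`: a restriction of `φ` satisfies
`C` exactly if it keeps one of them. -/
noncomputable def satVars (φ : PAssign D) (C : Clause D) : Finset V :=
  C.vars.filter (EdgeSat φ C)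

omit [DecidableEq α] in
lemma satClause_restrictVars_iff {φ : PAssign D} {C : Clause D} {W : Finset V} :
    SatClause (φ.restrictVars W) C ↔ ¬ Disjoint (satVars φ C) W := by
  rw [Finset.not_disjoint_iff]
  constructor
  · rintro ⟨⟨v, ε⟩, hC, ε', hφ, hne⟩
    obtain ⟨hφ, hv⟩ := Finset.mem_filter.1 hφ
    exact ⟨v, Finset.mem_filter.2 ⟨Finset.mem_image_of_mem _ hC, ε, hC, ε', hφ, hne⟩, hv⟩
  · rintro ⟨v, hsat, hv⟩
    obtain ⟨-, ε, hC, ε', hφ, hne⟩ := Finset.mem_filter.1 hsat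
    exact ⟨(v, ε), hC, ε', Finset.mem_filter.2 ⟨hφ, hv⟩, hne⟩

omit [DecidableEq α] in
lemma SatClause.not_disjoint_satVars {φ : PAssign D} {C : Clause D} (h : SatClause φ C) :
    ¬ Disjoint (satVars φ C) φ.vars :=
  satClause_restrictVars_iff.1 ((restrictVars_vars φ).symm ▸ h)

lemma vars_restrict_of_not_satClause {φ : PAssign D} {C : Clause D} (h : ¬ SatClause φ C) :
    (C.restrict φ).vars = C.vars \ φ.vars := by
  ext v
  simp only [FinFn.vars, Clause.restrict, FinFn.sdiff, Finset.mem_image, Finset.mem_sdiff]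
  constructor
  · rintro ⟨l, ⟨hC, hφ⟩, rfl⟩
    refine ⟨⟨l, hC, rfl⟩, ?_⟩
    rintro ⟨p, hp, hpl⟩
    refine h ⟨l, hC, p.2, hpl ▸ hp, fun hε ↦ hφ ?_⟩
    rwa [← Prod.ext hpl hε]
  · rintro ⟨⟨l, hC, rfl⟩, hv⟩
    exact ⟨l, ⟨hC, fun hφ ↦ hv ⟨l, hφ, rfl⟩⟩, rfl⟩

lemma applyM_eq_zero_iff {φ : PAssign D} {F : Multiset (Clause D)} :
    applyM φ F = 0 ↔ ∀ C ∈ F, SatClause φ C := by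
  simp [applyM, Multiset.filter_eq_nil]

variable {ι : Type*}

omit [DecidableEq α] in
lemma matchingSat_map_of_deficit_nonpos {c : ι → Clause D} {s : Finset ι}
    (hall : ∀ K ⊆ s, deficit (fun i ↦ (c i).vars) (numCopies D) K ≤ 0) :
    MatchingSat (s.val.map c) := by
  have hall' (K : Finset s) : deficit (fun i : s ↦ (c i).vars) (numCopies D) K ≤ 0 := by
    have hK := hall (K.map (Function.Embedding.subtype _)) (Finset.map_subtype_subset K)
    rwa [deficit_map] at hK
  obtain ⟨f, hf, hmem⟩ := exists_injective_of_deficit_nonpos hall'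
  refine ⟨s.attach.val.map fun i : s ↦ (c i, f i), ?_, ?_, ?_⟩
  · rw [Multiset.map_map, Finset.attach_val]
    exact Multiset.attach_map_val' s.val c
  · rw [Multiset.map_map]
    exact s.attach.nodup.map hf
  · intro p hp
    obtain ⟨i, -, rfl⟩ := Multiset.mem_map.1 hp
    simpa only [numCopies] using hmem i

lemma delta_map (c : ι → Clause D) (K : Finset ι) :
    delta (K.val.map c) = deficit (fun i ↦ (c i).vars) (numCopies D) K := by
  have hvars : mvars (K.val.map c) = K.biUnion fun i ↦ (c i).vars := by
    ext v
    simp [mvars, Finset.mem_sup]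
  rw [delta, deficit, hvars, Multiset.card_map, Finset.card_val]
  congr 1
  refine Finset.sum_congr rfl fun v hv ↦ ?_
  obtain ⟨i, -, hv⟩ := Finset.mem_biUnion.1 hv
  rw [numCopies, Nat.cast_pred (card_pos_of_mem_vars hv)]

variable [Fintype ι]

lemma matchingSat_applyM_of_hallOutside {c : ι → Clause D} {φ : PAssign D} {A : Finset V}
    (hAφ : A ⊆ φ.vars)
    (hall : HallOutside (fun i ↦ (c i).vars) (fun i ↦ satVars φ (c i)) (numCopies D) A) :
    MatchingSat (applyM (φ.restrictVars A) (Finset.univ.val.map c)) := by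
  set ψ := φ.restrictVars A
  have hψ : ψ.vars = A := vars_restrictVars hAφ
  have happly : applyM ψ (Finset.univ.val.map c) =
      (Finset.univ.filter fun i ↦ ¬ SatClause ψ (c i)).val.map fun i ↦ (c i).restrict ψ := by
    rw [applyM, Multiset.filter_map, Multiset.map_map]
    rfl
  rw [happly]
  refine matchingSat_map_of_deficit_nonpos fun K hK ↦ ?_
  have hunsat (i) (hi : i ∈ K) : ¬ SatClause ψ (c i) := (Finset.mem_filter.1 (hK hi)).2
  rw [deficit_congr _ fun i hi ↦ (vars_restrict_of_not_satClause (hunsat i hi)).trans (by rw [hψ])]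
  exact hall K fun i hi ↦ not_not.1 (mt satClause_restrictVars_iff.2 (hunsat i hi))

lemma deficit_le_deltaStar (c : ι → Clause D) (K : Finset ι) :
    deficit (fun i ↦ (c i).vars) (numCopies D) K ≤ deltaStar (Finset.univ.val.map c) := by
  rw [← delta_map]
  refine Finset.le_sup' delta (Multiset.mem_toFinset.2 (Multiset.mem_powerset.2 ?_))
  exact Multiset.map_le_map (Finset.val_le_iff.2 (Finset.subset_univ K))

end Clauses

/-- for every satisfiable multi-clause-set `F` there is a partial
assignment `φ` with `n(φ) ≤ δ*(F)` such that `φ * F` is matching satisfiable. -/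
theorem exists_small_assignment_matching_sat
    (hD : ∀ v, (D v).Nonempty) (F : Multiset (Clause D)) (hsat : Sat F) :
    ∃ φ : PAssign D, ((FinFn.vars φ).card : ℤ) ≤ deltaStar F ∧
      MatchingSat (applyM φ F) := by
  obtain ⟨φ, hφ⟩ := hsat
  let c : F → Clause D := fun C ↦ C
  have hF : Finset.univ.val.map c = F := F.map_univ_coe
  have hsatVars (C : F) : ¬ Disjoint (satVars φ (c C)) φ.vars :=
    (applyM_eq_zero_iff.1 hφ _ Multiset.coe_mem).not_disjoint_satVars
  have hall : HallOutside (fun C ↦ (c C).vars) (fun C ↦ satVars φ (c C)) (numCopies D)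
      φ.vars := by
    intro K hK
    rw [Finset.eq_empty_of_forall_notMem fun C hC ↦ hsatVars C (hK C hC), deficit_empty]
  obtain ⟨A, hAφ, hA⟩ := exists_minimal_le_of_wellFoundedLT _ _ hall
  obtain ⟨K, hK⟩ :=
    exists_card_le_deficit_of_minimal_hallOutside (fun _ ↦ Finset.filter_subset _ _) hA
  refine ⟨φ.restrictVars A, ?_, hF ▸ matchingSat_applyM_of_hallOutside hAφ hA.prop⟩
  rw [vars_restrictVars hAφ, ← hF]
  exact hK.trans (deficit_le_deltaStar c K)

end GCLS
end
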